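/- arXiv:2104.13681 — 10 statements merged into one kernel-verified Lean document; each statement's English description precedes it below -/
import Mathlib

section
/- For integers k ≥ 1, n ≥ 2k, and any fixed element x ∈ {1,…,n}, the number of stable k-element subsets of {1,…,n} that contain x equals C(n−k−1, k−1). -/
/-- A subset `A` of `{1,…,n}` is *stable* if it contains no two cyclically
consecutive elements: no `i < n` with both `i` and `i+1` in `A`, and not both
`n` and `1` in `A`. -/
def IsStable (n : ℕ) (A : Finset ℕ) : Prop :=
  (∀ i < n, ¬(i ∈ A ∧ i + 1 ∈ A)) ∧ ¬(n ∈ A ∧ 1 ∈ A)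

instance (n : ℕ) (A : Finset ℕ) : Decidable (IsStable n A) := by
  unfold IsStable; infer_instance

/-- The collection of stable `k`-element subsets of `{1,…,n}`. -/
def stableSets (n k : ℕ) : Finset (Finset ℕ) :=
  (Finset.Icc 1 n).powerset.filter fun A => A.card = k ∧ IsStable n A

/-- The `k`-element subsets of `{a,…,a+m-1}` without two consecutive elements. -/
def pathStableSets (a m k : ℕ) : Finset (Finset ℕ) :=
  ((Finset.Ico a (a + m)).powersetCard k).filter fun A => ∀ i ∈ A, i + 1 ∉ A

theorem mem_pathStableSets {a m k : ℕ} {A : Finset ℕ} :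
    A ∈ pathStableSets a m k ↔
      (∀ i ∈ A, a ≤ i ∧ i < a + m) ∧ A.card = k ∧ ∀ i ∈ A, i + 1 ∉ A := by
  simp [pathStableSets, Finset.mem_powersetCard, Finset.subset_iff, and_assoc]

theorem mem_stableSets {n k : ℕ} {A : Finset ℕ} :
    A ∈ stableSets n k ↔
      (∀ i ∈ A, 1 ≤ i ∧ i ≤ n) ∧ A.card = k ∧ IsStable n A := by
  simp [stableSets, Finset.subset_iff]

theorem pathStableSets_zero_right (a m : ℕ) : pathStableSets a m 0 = {∅} := by
  ext A
  simp only [mem_pathStableSets, Finset.card_eq_zero, Finset.mem_singleton]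
  constructor
  · exact fun h => h.2.1
  · rintro rfl
    simp

theorem card_pathStableSets_add_two (a m k : ℕ) :
    (pathStableSets a (m + 2) (k + 1)).card =
      (pathStableSets a (m + 1) (k + 1)).card + (pathStableSets a m k).card := by
  have hnot : ∀ B ∈ pathStableSets a m k, a + m + 1 ∉ B := fun B hB h => by
    have := (mem_pathStableSets.1 hB).1 _ h
    omega
  have hsplit : pathStableSets a (m + 2) (k + 1) =
      pathStableSets a (m + 1) (k + 1) ∪
        (pathStableSets a m k).image (insert (a + m + 1)) := by
    ext A
    simp only [Finset.mem_union, Finset.mem_image]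
    constructor
    · intro hA
      obtain ⟨hr, hc, hs⟩ := mem_pathStableSets.1 hA
      by_cases h : a + m + 1 ∈ A
      · refine Or.inr ⟨A.erase (a + m + 1), mem_pathStableSets.2 ⟨?_, ?_, ?_⟩,
          Finset.insert_erase h⟩
        · intro i hi
          obtain ⟨hne, hi⟩ := Finset.mem_erase.1 hi
          have h1 := hr i hi
          have h2 : i ≠ a + m := by
            rintro rfl
            exact hs _ hi h
          omega
        · rw [Finset.card_erase_of_mem h, hc, Nat.add_sub_cancel]
        · intro i hi hi'
          exact hs i (Finset.mem_of_mem_erase hi) (Finset.mem_of_mem_erase hi')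
      · refine Or.inl (mem_pathStableSets.2 ⟨fun i hi => ?_, hc, hs⟩)
        have h1 := hr i hi
        have h2 : i ≠ a + m + 1 := by
          rintro rfl
          exact h hi
        omega
    · rintro (hA | ⟨B, hB, rfl⟩)
      · obtain ⟨hr, hc, hs⟩ := mem_pathStableSets.1 hA
        refine mem_pathStableSets.2 ⟨fun i hi => ?_, hc, hs⟩
        have := hr i hi
        omega
      · have hn := hnot B hB
        obtain ⟨hr, hc, hs⟩ := mem_pathStableSets.1 hB
        refine mem_pathStableSets.2 ⟨?_, ?_, ?_⟩
        · intro i hi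
          rcases Finset.mem_insert.1 hi with rfl | hi
          · omega
          · have := hr i hi
            omega
        · rw [Finset.card_insert_of_notMem hn, hc]
        · intro i hi hi'
          rcases Finset.mem_insert.1 hi with rfl | hi <;>
            rcases Finset.mem_insert.1 hi' with h | hi'
          · omega
          · have := hr _ hi'
            omega
          · have := hr _ hi
            omega
          · exact hs i hi hi'
  rw [hsplit, Finset.card_union_of_disjoint, Finset.card_image_of_injOn]
  · intro B hB C hC h
    rw [← Finset.erase_insert (hnot B hB), ← Finset.erase_insert (hnot C hC)]
    exact congrArg (fun A => A.erase (a + m + 1)) h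
  · rw [Finset.disjoint_left]
    intro A hA hA'
    obtain ⟨B, -, rfl⟩ := Finset.mem_image.1 hA'
    have := (mem_pathStableSets.1 hA).1 _ (Finset.mem_insert_self _ _)
    omega

theorem card_pathStableSets (a : ℕ) :
    ∀ m k : ℕ, (pathStableSets a m k).card = (m + 1 - k).choose k
  | m, 0 => by simp [pathStableSets_zero_right]
  | 0, k + 1 => by simp [pathStableSets]
  | 1, 1 => by
    have : pathStableSets a 1 1 = {{a}} := by
      ext A
      simp only [mem_pathStableSets, Finset.mem_singleton]
      constructor
      · rintro ⟨hr, hc, -⟩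
        obtain ⟨b, rfl⟩ := Finset.card_eq_one.1 hc
        have := hr b (Finset.mem_singleton_self b)
        rw [show b = a by omega]
      · rintro rfl
        simp
    simp [this]
  | 1, k + 2 => by
    have : pathStableSets a 1 (k + 2) = ∅ := by
      rw [pathStableSets, Finset.powersetCard_eq_empty.2 (by simp), Finset.filter_empty]
    simp [this]
  | m + 2, k + 1 => by
    rw [card_pathStableSets_add_two, card_pathStableSets a (m + 1), card_pathStableSets a m]
    rcases le_or_gt k (m + 1) with h | h
    · rw [show m + 2 + 1 - (k + 1) = (m + 1 - k) + 1 by omega,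
        show m + 1 + 1 - (k + 1) = m + 1 - k by omega, Nat.choose_succ_succ, add_comm]
    · rw [Nat.choose_eq_zero_of_lt, Nat.choose_eq_zero_of_lt, Nat.choose_eq_zero_of_lt] <;> omega

/-- The rotation `1 ↦ 2 ↦ ⋯ ↦ n ↦ 1`. -/
def cyclicSucc (n i : ℕ) : ℕ := if i = n then 1 else i + 1

theorem card_filter_mem_le_cyclicSucc (n k x : ℕ) (hn : 2 ≤ n) :
    ((stableSets n k).filter fun A => x ∈ A).card ≤
      ((stableSets n k).filter fun A => cyclicSucc n x ∈ A).card := by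
  have hinj : Set.InjOn (cyclicSucc n) (Set.Icc 1 n) := by
    rintro i ⟨hi, hi'⟩ j ⟨hj, hj'⟩ h
    simp only [cyclicSucc] at h
    split_ifs at h <;> omega
  have hsub : ∀ A ∈ (stableSets n k).filter fun A => x ∈ A, (A : Set ℕ) ⊆ Set.Icc 1 n :=
    fun A hA i hi => (mem_stableSets.1 (Finset.mem_filter.1 hA).1).1 i hi
  refine Finset.card_le_card_of_injOn (fun A => A.image (cyclicSucc n)) ?_ ?_
  · intro A hA
    have hAs := hsub A hA
    obtain ⟨hA, hx⟩ := Finset.mem_filter.1 hA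
    obtain ⟨hr, hc, hs, hs'⟩ := mem_stableSets.1 hA
    refine Finset.mem_filter.2 ⟨mem_stableSets.2 ⟨?_, ?_, ?_, ?_⟩,
      Finset.mem_image_of_mem _ hx⟩
    · intro i hi
      obtain ⟨j, hj, rfl⟩ := Finset.mem_image.1 hi
      have := hr j hj
      simp only [cyclicSucc]
      split_ifs <;> omega
    · rw [Finset.card_image_of_injOn (hinj.mono hAs), hc]
    · rintro i hi ⟨h1, h2⟩
      obtain ⟨p, hp, h1⟩ := Finset.mem_image.1 h1
      obtain ⟨q, hq, h2⟩ := Finset.mem_image.1 h2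
      have := hr p hp
      have := hr q hq
      simp only [cyclicSucc] at h1 h2
      split_ifs at h1 h2
      · omega
      · obtain rfl : q = 1 := by omega
        subst p
        exact hs' ⟨hp, hq⟩
      · omega
      · obtain rfl : q = p + 1 := by omega
        exact hs p (by omega) ⟨hp, hq⟩
    · rintro ⟨h1, h2⟩
      obtain ⟨p, hp, h1⟩ := Finset.mem_image.1 h1
      obtain ⟨q, hq, h2⟩ := Finset.mem_image.1 h2
      have := hr p hp
      have := hr q hq
      simp only [cyclicSucc] at h1 h2
      split_ifs at h1 h2
      · omega
      · omega
      · obtain rfl : q = p + 1 := by omega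
        exact hs p (by omega) ⟨hp, hq⟩
      · omega
  · intro A hA B hB h
    have h' : Set.image (cyclicSucc n) A = Set.image (cyclicSucc n) B := by
      simpa using congrArg (fun C : Finset ℕ => (C : Set ℕ)) h
    exact Finset.coe_injective ((hinj.image_eq_image_iff (hsub A hA) (hsub B hB)).1 h')

theorem card_filter_mem_le_of_le {n k x y : ℕ} (hn : 2 ≤ n) (hxy : x ≤ y) (hy : y ≤ n) :
    ((stableSets n k).filter fun A => x ∈ A).card ≤
      ((stableSets n k).filter fun A => y ∈ A).card := by
  induction y, hxy using Nat.le_induction with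
  | base => exact le_rfl
  | succ y _ ih =>
    have h := card_filter_mem_le_cyclicSucc n k y hn
    rw [cyclicSucc, if_neg (by omega)] at h
    exact (ih (by omega)).trans h

theorem card_filter_mem_eq_last {n k x : ℕ} (hn : 2 ≤ n) (hx : 1 ≤ x) (hxn : x ≤ n) :
    ((stableSets n k).filter fun A => x ∈ A).card =
      ((stableSets n k).filter fun A => n ∈ A).card := by
  refine le_antisymm (card_filter_mem_le_of_le hn hxn le_rfl) ?_
  have h := card_filter_mem_le_cyclicSucc n k n hn
  rw [cyclicSucc, if_pos rfl] at h
  exact h.trans (card_filter_mem_le_of_le hn hx hxn)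

theorem card_filter_last_mem (n k : ℕ) (hn : 2 ≤ n) :
    ((stableSets n (k + 1)).filter fun A => n ∈ A).card =
      (pathStableSets 2 (n - 3) k).card := by
  have hnot : ∀ B ∈ pathStableSets 2 (n - 3) k, n ∉ B := fun B hB h => by
    have := (mem_pathStableSets.1 hB).1 _ h
    omega
  refine Finset.card_bij' (fun A _ => A.erase n) (fun B _ => insert n B) ?_ ?_ ?_ ?_
  · intro A hA
    obtain ⟨hA, hx⟩ := Finset.mem_filter.1 hA
    obtain ⟨hr, hc, hs, hs'⟩ := mem_stableSets.1 hA
    refine mem_pathStableSets.2 ⟨?_, ?_, ?_⟩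
    · intro i hi
      obtain ⟨hne, hi⟩ := Finset.mem_erase.1 hi
      have h1 := hr i hi
      have h2 : i ≠ 1 := by
        rintro rfl
        exact hs' ⟨hx, hi⟩
      have h3 : i + 1 ≠ n := fun h => hs i (by omega) ⟨hi, h ▸ hx⟩
      omega
    · rw [Finset.card_erase_of_mem hx, hc, Nat.add_sub_cancel]
    · intro i hi hi'
      have hi' := Finset.mem_of_mem_erase hi'
      have := hr _ hi'
      exact hs i (by omega) ⟨Finset.mem_of_mem_erase hi, hi'⟩
  · intro B hB
    have hnB := hnot B hB
    obtain ⟨hr, hc, hs⟩ := mem_pathStableSets.1 hB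
    refine Finset.mem_filter.2 ⟨mem_stableSets.2 ⟨?_, ?_, ?_, ?_⟩,
      Finset.mem_insert_self _ _⟩
    · intro i hi
      rcases Finset.mem_insert.1 hi with rfl | hi
      · omega
      · have := hr i hi
        omega
    · rw [Finset.card_insert_of_notMem hnB, hc]
    · rintro i hi ⟨h1, h2⟩
      have h1 := Finset.mem_of_mem_insert_of_ne h1 hi.ne
      rcases Finset.mem_insert.1 h2 with h2 | h2
      · have := hr i h1
        omega
      · exact hs i h1 h2
    · rintro ⟨-, h⟩
      have := hr 1 (Finset.mem_of_mem_insert_of_ne h (by omega))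
      omega
  · exact fun A hA => Finset.insert_erase (Finset.mem_filter.1 hA).2
  · exact fun B hB => Finset.erase_insert (hnot B hB)

theorem stmt1 (n k : ℕ) (hk : 1 ≤ k) (hn : 2 * k ≤ n)
    (x : ℕ) (hx : x ∈ Finset.Icc 1 n) :
    ((stableSets n k).filter fun A => x ∈ A).card = Nat.choose (n - k - 1) (k - 1) := by
  obtain ⟨hx1, hxn⟩ := Finset.mem_Icc.1 hx
  obtain ⟨k, rfl⟩ : ∃ j, k = j + 1 := ⟨k - 1, by omega⟩
  rw [card_filter_mem_eq_last (by omega) hx1 hxn, card_filter_last_mem n k (by omega),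
    card_pathStableSets, Nat.add_sub_cancel]
  rcases Nat.eq_zero_or_pos k with rfl | hk
  · simp
  · rw [show n - 3 + 1 - k = n - (k + 1) - 1 by omega]
end

section
/- Let k ≥ 2, n ≥ 2k, and let 𝒞 be a family of stable k-element subsets of {1,…,n} that is pairwise intersecting (any two members of 𝒞 have a common element) and not star-shaped (there is no single element belonging to every member of 𝒞). Then |𝒞| ≤ k²·C(n+k−1, k−2). -/
/-- At most `C(|X|, k - 2)` of the `k`-subsets of `X` contain two given distinct elements. -/
theorem card_filter_mem_mem_le {α : Type*} [DecidableEq α] (X : Finset α) (k : ℕ)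
    (F : Finset (Finset α)) (hF : ∀ B ∈ F, B ⊆ X ∧ B.card = k) {x y : α} (hxy : y ≠ x) :
    (F.filter fun B => x ∈ B ∧ y ∈ B).card ≤ X.card.choose (k - 2) := by
  have hsub : (F.filter fun B => x ∈ B ∧ y ∈ B) ⊆
      (X.powersetCard (k - 2)).image fun S => insert x (insert y S) := by
    intro B hB
    obtain ⟨hBF, hx, hy⟩ := Finset.mem_filter.1 hB
    obtain ⟨hBX, hBk⟩ := hF B hBF
    have hy' : y ∈ B.erase x := Finset.mem_erase.2 ⟨hxy, hy⟩
    refine Finset.mem_image.2 ⟨(B.erase x).erase y, Finset.mem_powersetCard.2 ⟨?_, ?_⟩, ?_⟩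
    · exact ((Finset.erase_subset _ _).trans (Finset.erase_subset _ _)).trans hBX
    · rw [Finset.card_erase_of_mem hy', Finset.card_erase_of_mem hx, hBk]
      rfl
    · rw [Finset.insert_erase hy', Finset.insert_erase hx]
  calc _ ≤ _ := Finset.card_le_card hsub
    _ ≤ _ := Finset.card_image_le
    _ = _ := Finset.card_powersetCard _ _

theorem stmt4 (n k : ℕ) (hk : 2 ≤ k) (hn : 2 * k ≤ n)
    (𝒞 : Finset (Finset ℕ))
    (hmem : ∀ A ∈ 𝒞, A ∈ stableSets n k)
    (hint : ∀ A ∈ 𝒞, ∀ B ∈ 𝒞, (A ∩ B).Nonempty)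
    (hstar : ¬ ∃ x, ∀ A ∈ 𝒞, x ∈ A) :
    𝒞.card ≤ k ^ 2 * Nat.choose (n + k - 1) (k - 2) := by
  have hF : ∀ B ∈ 𝒞, B ⊆ Finset.Icc 1 n ∧ B.card = k := fun B hB => by
    have h := hmem B hB
    simp only [stableSets, Finset.mem_filter, Finset.mem_powerset] at h
    exact ⟨h.1, h.2.1⟩
  obtain rfl | ⟨A, hA⟩ := 𝒞.eq_empty_or_nonempty
  · simp
  push Not at hstar
  choose f hf hxf using hstar
  -- A member of `𝒞` meets `A` in some `x`, and meets `f x`, which avoids `x`, in some `y ≠ x`.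
  have hcover : 𝒞 ⊆ A.biUnion fun x => (f x).biUnion fun y =>
      𝒞.filter fun B => x ∈ B ∧ y ∈ B := by
    intro B hB
    obtain ⟨x, hx⟩ := hint A hA B hB
    obtain ⟨y, hy⟩ := hint (f x) (hf x) B hB
    rw [Finset.mem_inter] at hx hy
    simp only [Finset.mem_biUnion, Finset.mem_filter]
    exact ⟨x, hx.1, y, hy.1, hB, hx.2, hy.2⟩
  have hpair : ∀ x, ∀ y ∈ f x,
      (𝒞.filter fun B => x ∈ B ∧ y ∈ B).card ≤ (n + k - 1).choose (k - 2) := by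
    intro x y hy
    have hyx : y ≠ x := fun h => hxf x (h ▸ hy)
    have h := card_filter_mem_mem_le _ k 𝒞 hF hyx
    rw [Nat.card_Icc, Nat.add_sub_cancel] at h
    exact h.trans (Nat.choose_le_choose _ (by omega))
  calc 𝒞.card ≤ _ := Finset.card_le_card hcover
    _ ≤ A.card * (k * (n + k - 1).choose (k - 2)) := by
      refine Finset.card_biUnion_le_card_mul _ _ _ fun x _ => ?_
      rw [← (hF _ (hf x)).2]
      refine Finset.card_biUnion_le_card_mul _ _ _ fun y hy => ?_
      rw [(hF _ (hf x)).2]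
      exact hpair x y hy
    _ = k ^ 2 * (n + k - 1).choose (k - 2) := by
      rw [(hF A hA).2]
      ring
end

section
/- Let G be a finite simple graph on n vertices and let (C, H, R) be a partition of its vertex set with C nonempty and |C| = |H|, such that: (1) C is a clique in G; (2) every vertex of C is adjacent in G to every vertex of R; and (3) there is a bijection M : H → C such that for every h ∈ H, h and M(h) are not adjacent in G. Then for every integer t: χ(G) ≤ t if and only if |C| ≤ t and χ(G[R]) ≤ t − |C|. (This is the safety of the crown-decomposition reduction for dual coloring: taking t = n − k, G is (n−k)-colorable iff G[R], which has n − 2|H| vertices, is ((n−2|H|) − (k−|H|))-colorable.) -/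
namespace SimpleGraph

variable {V : Type*} {G : SimpleGraph V}

/-- A coloring spends `C.card` colors on a clique `C`, and none of them can be reused on a set
completely joined to `C`. -/
theorem Colorable.induce_of_isClique_of_forall_adj {C : Finset V} {R : Set V} {t : ℕ}
    (hG : G.Colorable t) (hC : G.IsClique (C : Set V)) (hCR : ∀ c ∈ C, ∀ r ∈ R, G.Adj c r) :
    (G.induce R).Colorable (t - C.card) := by
  classical
  obtain ⟨f⟩ := hG
  have hinj : Set.InjOn f (C : Set V) := fun a ha b hb hab => by
    by_contra hne
    exact f.valid (hC ha hb hne) hab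
  have hmem (r : R) : f r ∉ C.image f := by
    intro hr
    obtain ⟨c, hc, hcr⟩ := Finset.mem_image.mp hr
    exact f.valid (hCR c hc r r.2) hcr
  let g : (G.induce R).Coloring {x : Fin t // x ∉ C.image f} :=
    Coloring.mk (fun r => ⟨f r, hmem r⟩) fun {a b} hab h =>
      f.valid (v := (a : V)) (w := (b : V)) hab (congrArg Subtype.val h)
  have hcard : Fintype.card {x : Fin t // x ∉ C.image f} = t - C.card := by
    rw [Fintype.card_subtype_compl, Fintype.card_fin, Fintype.card_coe,
      Finset.card_image_of_injOn hinj]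
  exact hcard ▸ g.colorable

/-- A coloring of `G.induce R` extends to `G` with `C.card` new colors when the vertices outside
`C` and `R` are injectively assigned non-neighbors in `C`. -/
theorem Colorable.of_induce_of_injective {C H : Finset V} {R : Set V} {s : ℕ}
    (hR : (G.induce R).Colorable s) (hcover : ∀ v, v ∈ C ∨ v ∈ H ∨ v ∈ R)
    {M : {x : V // x ∈ H} → {x : V // x ∈ C}} (hM : Function.Injective M)
    (hMnonadj : ∀ h : {x : V // x ∈ H}, ¬ G.Adj (h : V) (M h : V)) :
    G.Colorable (C.card + s) := by
  classical
  obtain ⟨g⟩ := hR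
  let color (v : V) : {x : V // x ∈ C} ⊕ Fin s :=
    if hC : v ∈ C then .inl ⟨v, hC⟩
    else if hH : v ∈ H then .inl (M ⟨v, hH⟩)
    else .inr (g ⟨v, ((hcover v).resolve_left hC).resolve_left hH⟩)
  have hvalid {v w : V} (hvw : G.Adj v w) : color v ≠ color w := by
    intro h
    simp only [color] at h
    split_ifs at h with hvC hwC hwH hvH hwC hwH hwC hwH
    · exact hvw.ne (congrArg Subtype.val (Sum.inl.inj h))
    · exact hMnonadj ⟨w, hwH⟩ (congrArg Subtype.val (Sum.inl.inj h) ▸ hvw.symm)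
    · exact hMnonadj ⟨v, hvH⟩ (congrArg Subtype.val (Sum.inl.inj h) ▸ hvw)
    · exact hvw.ne (congrArg Subtype.val (hM (Sum.inl.inj h)))
    · exact g.valid (by exact hvw) (Sum.inr.inj h)
  simpa using (Coloring.mk color hvalid).colorable

end SimpleGraph

theorem stmt8 {V : Type*} [Fintype V] [DecidableEq V] (G : SimpleGraph V)
    (C H R : Finset V)
    (hcover : C ∪ H ∪ R = Finset.univ)
    (hCH : Disjoint C H) (hCR : Disjoint C R) (hHR : Disjoint H R)
    (hCne : C.Nonempty) (hcard : C.card = H.card)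
    (hclique : G.IsClique (C : Set V))
    (hcomplete : ∀ c ∈ C, ∀ r ∈ R, G.Adj c r)
    (M : {x : V // x ∈ H} → {x : V // x ∈ C}) (hMbij : Function.Bijective M)
    (hMnonadj : ∀ h : {x : V // x ∈ H}, ¬ G.Adj (h : V) (M h : V)) :
    ∀ t : ℕ,
      G.chromaticNumber ≤ (t : ℕ∞) ↔
        C.card ≤ t ∧ (G.induce (R : Set V)).chromaticNumber ≤ ((t - C.card : ℕ) : ℕ∞) := by
  intro t
  rw [SimpleGraph.chromaticNumber_le_iff_colorable, SimpleGraph.chromaticNumber_le_iff_colorable]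
  constructor
  · intro hG
    exact ⟨hclique.card_le_of_colorable hG,
      hG.induce_of_isClique_of_forall_adj hclique hcomplete⟩
  · rintro ⟨hle, hR⟩
    have hmem (v : V) : v ∈ C ∨ v ∈ H ∨ v ∈ (R : Set V) := by
      simpa [← hcover, or_assoc] using Finset.mem_univ v
    rw [← Nat.add_sub_cancel' hle]
    exact hR.of_induce_of_injective hmem hMbij.injective hMnonadj
end

section
/- Let G be a finite simple graph, k ≥ 1 an integer, and v a vertex of G of degree at least k+1. Then G has a vertex cover of size at most k if and only if G − v has a vertex cover of size at most k−1. -/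
/-- A vertex whose degree exceeds the size of a vertex cover belongs to that cover. -/
theorem SimpleGraph.mem_of_cover_of_card_lt_degree {V : Type*} (G : SimpleGraph V) {v : V}
    [Fintype (G.neighborSet v)] {S : Finset V} (hS : ∀ u w, G.Adj u w → u ∈ S ∨ w ∈ S)
    (hlt : S.card < G.degree v) : v ∈ S := by
  by_contra hv
  have hsub : G.neighborFinset v ⊆ S := fun w hw =>
    (hS v w ((G.mem_neighborFinset v w).1 hw)).resolve_left hv
  exact hlt.not_ge (Finset.card_le_card hsub)

theorem stmt9 {V : Type*} [Fintype V] [DecidableEq V] (G : SimpleGraph V)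
    [DecidableRel G.Adj] (k : ℕ) (hk : 1 ≤ k)
    (v : V) (hdeg : k + 1 ≤ G.degree v) :
    (∃ S : Finset V, (∀ u w, G.Adj u w → u ∈ S ∨ w ∈ S) ∧ S.card ≤ k) ↔
      (∃ S : Finset {w : V // w ≠ v},
        (∀ u w, (G.induce {w : V | w ≠ v}).Adj u w → u ∈ S ∨ w ∈ S) ∧ S.card ≤ k - 1) := by
  constructor
  · rintro ⟨S, hS, hcard⟩
    have hv : v ∈ S := G.mem_of_cover_of_card_lt_degree hS (by omega)
    refine ⟨S.subtype (· ≠ v), fun u w huw => ?_, ?_⟩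
    · exact (hS u w huw).imp Finset.mem_subtype.2 Finset.mem_subtype.2
    · rw [Finset.card_subtype, Finset.filter_ne', Finset.card_erase_of_mem hv]
      omega
  · rintro ⟨S, hS, hcard⟩
    refine ⟨insert v (S.map (Function.Embedding.subtype _)), fun u w huw => ?_, ?_⟩
    · by_cases hu : u = v
      · simp [hu]
      by_cases hw : w = v
      · simp [hw]
      exact (hS ⟨u, hu⟩ ⟨w, hw⟩ huw).imp
        (fun h => Finset.mem_insert_of_mem (Finset.mem_map_of_mem _ h))
        (fun h => Finset.mem_insert_of_mem (Finset.mem_map_of_mem _ h))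
    · refine (Finset.card_insert_le _ _).trans ?_
      rw [Finset.card_map]
      omega
end

section
/- Let G be a finite simple graph and u ≠ v two vertices with equal closed neighborhoods, N[u] = N[v] (in particular u and v are adjacent), and suppose u has a neighbor w ∉ {u, v}. Then for every integer k: G has an edge clique cover of size at most k if and only if G − v has an edge clique cover of size at most k. -/
/-- `G` has an edge clique cover consisting of (at most) `k` cliques: a family of
`k` cliques such that every edge of `G` has both endpoints in some clique of the
family. -/
def HasEdgeCliqueCover {V : Type*} (G : SimpleGraph V) (k : ℕ) : Prop :=
  ∃ f : Fin k → Set V, (∀ i, G.IsClique (f i)) ∧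
    ∀ u w, G.Adj u w → ∃ i, u ∈ f i ∧ w ∈ f i

/-- Edge clique covers restrict to induced subgraphs. -/
theorem HasEdgeCliqueCover.induce {V : Type*} {G : SimpleGraph V} {k : ℕ}
    (h : HasEdgeCliqueCover G k) (s : Set V) : HasEdgeCliqueCover (G.induce s) k := by
  obtain ⟨f, hclique, hcover⟩ := h
  refine ⟨fun i => Subtype.val ⁻¹' f i, fun i a ha b hb hab => ?_, fun a b hab => ?_⟩
  · exact hclique i ha hb (Subtype.coe_injective.ne hab)
  · exact hcover a b hab

/-- An edge clique cover pulls back along a map `r` that preserves and reflects adjacency between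
distinct images, whose fibers are cliques, and whose values at adjacent vertices with a common
image are not isolated. -/
theorem HasEdgeCliqueCover.of_map {V W : Type*} {G : SimpleGraph V} {H : SimpleGraph W} {k : ℕ}
    (h : HasEdgeCliqueCover H k) (r : V → W)
    (hadj : ∀ a b, r a ≠ r b → (H.Adj (r a) (r b) ↔ G.Adj a b))
    (hfiber : ∀ a b, a ≠ b → r a = r b → G.Adj a b ∧ ∃ c, H.Adj (r a) c) :
    HasEdgeCliqueCover G k := by
  obtain ⟨f, hclique, hcover⟩ := h
  refine ⟨fun i => r ⁻¹' f i, fun i a ha b hb hab => ?_, fun a b hab => ?_⟩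
  · by_cases hr : r a = r b
    · exact (hfiber a b hab hr).1
    · exact (hadj a b hr).1 (hclique i ha hb hr)
  · by_cases hr : r a = r b
    · obtain ⟨c, hc⟩ := (hfiber a b hab.ne hr).2
      obtain ⟨i, hi, -⟩ := hcover _ _ hc
      exact ⟨i, hi, show r b ∈ f i from hr ▸ hi⟩
    · exact hcover _ _ ((hadj a b hr).2 hab)

theorem stmt11 {V : Type*} [Fintype V] [DecidableEq V] (G : SimpleGraph V)
    (u v : V) (huv : u ≠ v)
    (hN : ∀ x, (x = u ∨ G.Adj u x) ↔ (x = v ∨ G.Adj v x))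
    (w : V) (hwu : w ≠ u) (hwv : w ≠ v) (hadj : G.Adj u w) :
    ∀ k : ℕ, HasEdgeCliqueCover G k ↔ HasEdgeCliqueCover (G.induce {x : V | x ≠ v}) k := by
  refine fun k => ⟨fun h => h.induce _, fun h => ?_⟩
  have hsymm : ∀ a b, G.Adj a b ↔ G.Adj b a := G.adj_comm
  have huv_adj : G.Adj u v := by grind
  let r : V → {x : V | x ≠ v} := fun x => if hx : x = v then ⟨u, huv⟩ else ⟨x, hx⟩
  have hr : ∀ x, (r x : V) = if x = v then u else x := fun x => by
    by_cases hx : x = v <;> simp [r, hx]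
  refine h.of_map r (fun a b hab => ?_) (fun a b hab hrab => ?_)
  · have hab' := Subtype.coe_injective.ne hab
    rw [SimpleGraph.comap_adj]
    simp only [Function.Embedding.subtype_apply, hr] at hab' ⊢
    grind
  · have hrab' := congrArg Subtype.val hrab
    rw [hr, hr] at hrab'
    refine ⟨by grind, ⟨w, hwv⟩, ?_⟩
    rw [SimpleGraph.comap_adj]
    simp only [Function.Embedding.subtype_apply, hr]
    grind
end

section
/- Let G be a finite simple graph on n vertices that has an edge clique cover consisting of k cliques. Then there exists a set S of vertices with |S| ≥ n/2^k such that either every vertex of S is isolated, or S is a clique in G and all vertices u, v ∈ S have equal closed neighborhoods N[u] = N[v]. -/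
/-- Given an edge clique cover, the closed neighborhood of a vertex is itself together with the
cliques containing it. -/
theorem eq_or_adj_iff_of_cover {V ι : Type*} {G : SimpleGraph V} {f : ι → Set V}
    (hclique : ∀ i, G.IsClique (f i)) (hcover : ∀ u w, G.Adj u w → ∃ i, u ∈ f i ∧ w ∈ f i)
    (u x : V) : (x = u ∨ G.Adj u x) ↔ x = u ∨ ∃ i, u ∈ f i ∧ x ∈ f i := by
  constructor
  · exact Or.imp_right (hcover u x)
  · rintro (h | ⟨i, hu, hx⟩)
    · exact Or.inl h
    · by_cases h : x = u
      · exact Or.inl h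
      · exact Or.inr (hclique i hu hx (Ne.symm h))

theorem stmt12 {V : Type*} [Fintype V] [DecidableEq V] (G : SimpleGraph V) (k : ℕ)
    (hcover : HasEdgeCliqueCover G k) :
    ∃ S : Finset V, Fintype.card V ≤ S.card * 2 ^ k ∧
      ((∀ v ∈ S, ∀ x, ¬ G.Adj v x) ∨
        (G.IsClique (S : Set V) ∧
          ∀ u ∈ S, ∀ v ∈ S, ∀ x, ((x = u ∨ G.Adj u x) ↔ (x = v ∨ G.Adj v x)))) := by
  classical
  obtain ⟨f, hclique, hadj⟩ := hcover
  let g : V → Finset (Fin k) := fun v => Finset.univ.filter fun i => v ∈ f i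
  have mem_g (v : V) (i : Fin k) : i ∈ g v ↔ v ∈ f i := by simp [g]
  obtain ⟨T, hT⟩ : ∃ T, Fintype.card V ≤ (Finset.univ.filter fun v => g v = T).card * 2 ^ k := by
    by_contra! h
    have hsum : ∑ T, (Finset.univ.filter fun v => g v = T).card = Fintype.card V :=
      (Finset.card_eq_sum_card_fiberwise fun v _ => Finset.mem_coe.2 (Finset.mem_univ (g v))).symm
    have hlt := Finset.sum_lt_sum_of_nonempty Finset.univ_nonempty fun T _ => h T
    rw [← Finset.sum_mul, hsum] at hlt
    simp [mul_comm] at hlt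
  have mem_iff {v : V} (hv : v ∈ Finset.univ.filter fun v => g v = T) (i : Fin k) :
      v ∈ f i ↔ i ∈ T := by
    rw [← mem_g, (Finset.mem_filter.1 hv).2]
  refine ⟨_, hT, ?_⟩
  rcases T.eq_empty_or_nonempty with rfl | ⟨i, hi⟩
  · left
    intro v hv x hvx
    obtain ⟨i, hi, -⟩ := hadj v x hvx
    exact Finset.notMem_empty i ((mem_iff hv i).1 hi)
  · right
    refine ⟨fun u hu v hv huv => hclique i ((mem_iff hu i).2 hi) ((mem_iff hv i).2 hi) huv, ?_⟩
    intro u hu v hv x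
    have mem_or_iff {w : V} (hw : w ∈ Finset.univ.filter fun v => g v = T) :
        (x = w ∨ G.Adj w x) ↔ ∃ j ∈ T, x ∈ f j := by
      rw [eq_or_adj_iff_of_cover hclique hadj]
      simp only [mem_iff hw]
      exact or_iff_right_of_imp fun h => ⟨i, hi, h ▸ (mem_iff hw i).2 hi⟩
    rw [mem_or_iff hu, mem_or_iff hv]
end

section
/- Let U be a set, 𝒜 a family of subsets of U, k ≥ 0 an integer, and let S_1, …, S_{k+1} ∈ 𝒜 be k+1 pairwise distinct sets forming a sunflower with core Y, i.e., S_i ∩ S_j = Y for all i ≠ j. Then for every finite set H ⊆ U with |H| ≤ k: H intersects every member of 𝒜 if and only if H intersects every member of (𝒜 ∖ {S_1,…,S_{k+1}}) ∪ {Y}. In particular, 𝒜 has a hitting set of size at most k if and only if (𝒜 ∖ {S_1,…,S_{k+1}}) ∪ {Y} does. -/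
/-- A finite set with at most `k` elements that meets all `k + 1` petals of a sunflower
meets its core. -/
theorem inter_core_nonempty_of_card_le {U : Type*} {k : ℕ} {Y : Set U}
    {S : Fin (k + 1) → Set U} (hcore : ∀ i j, i ≠ j → S i ∩ S j = Y)
    {H : Finset U} (hH : H.card ≤ k) (hit : ∀ i, ((H : Set U) ∩ S i).Nonempty) :
    ((H : Set U) ∩ Y).Nonempty := by
  choose f hfH hfS using hit
  obtain ⟨i, -, j, -, hij, hf⟩ := Finset.exists_ne_map_eq_of_card_lt_of_maps_to
    (s := Finset.univ) (t := H) (f := f) (by simpa using Nat.lt_succ_of_le hH)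
    (fun i _ => hfH i)
  exact ⟨f i, hfH i, hcore i j hij ▸ ⟨hfS i, hf ▸ hfS j⟩⟩

/-- The core of a sunflower with at least two petals is contained in each petal. -/
theorem core_subset_petal {U : Type*} {k : ℕ} (hk : 0 < k) {Y : Set U}
    {S : Fin (k + 1) → Set U} (hcore : ∀ i j, i ≠ j → S i ∩ S j = Y) (i : Fin (k + 1)) :
    Y ⊆ S i := by
  have : Nontrivial (Fin (k + 1)) := Fin.nontrivial_iff_two_le.2 (by omega)
  obtain ⟨j, hj⟩ := exists_ne i
  exact hcore i j hj.symm ▸ Set.inter_subset_left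

theorem stmt13 {U : Type*} (𝒜 : Set (Set U)) (k : ℕ) (Y : Set U)
    (S : Fin (k + 1) → Set U)
    (hmem : ∀ i, S i ∈ 𝒜)
    (hdist : Function.Injective S)
    (hcore : ∀ i j, i ≠ j → S i ∩ S j = Y) :
    (∀ H : Finset U, H.card ≤ k →
      ((∀ A ∈ 𝒜, ((H : Set U) ∩ A).Nonempty) ↔
        (∀ A ∈ (𝒜 \ Set.range S) ∪ {Y}, ((H : Set U) ∩ A).Nonempty))) ∧
    ((∃ H : Finset U, H.card ≤ k ∧ ∀ A ∈ 𝒜, ((H : Set U) ∩ A).Nonempty) ↔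
      (∃ H : Finset U, H.card ≤ k ∧
        ∀ A ∈ (𝒜 \ Set.range S) ∪ {Y}, ((H : Set U) ∩ A).Nonempty)) := by
  have key : ∀ H : Finset U, H.card ≤ k →
      ((∀ A ∈ 𝒜, ((H : Set U) ∩ A).Nonempty) ↔
        (∀ A ∈ (𝒜 \ Set.range S) ∪ {Y}, ((H : Set U) ∩ A).Nonempty)) := by
    intro H hH
    constructor
    · rintro hit A (hA | rfl)
      · exact hit A hA.1
      · exact inter_core_nonempty_of_card_le hcore hH fun i => hit _ (hmem i)
    · intro hit A hA
      by_cases hAS : A ∈ Set.range S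
      · obtain ⟨i, rfl⟩ := hAS
        obtain ⟨x, hxH, hxY⟩ := hit Y (Or.inr rfl)
        have hk : 0 < k := (Finset.card_pos.2 ⟨x, hxH⟩).trans_le hH
        exact ⟨x, hxH, core_subset_petal hk hcore i hxY⟩
      · exact hit A (Or.inl ⟨hA, hAS⟩)
  exact ⟨key, exists_congr fun H => and_congr_right (key H)⟩
end

section
/- Let m, n ≥ 1 and let W be a social welfare function for n agents over the alternatives [m] that is unanimous and satisfies IIA. Then for every B ⊆ [m] with B ≠ [m], the social welfare function W_{−B} over the alternatives [m]∖B is unanimous and satisfies IIA. -/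
/-- A preference over `α`: a strict linear order, given as a relation that is
trichotomous, irreflexive and transitive. `σ.1 a b` means `a` is preferred to `b`. -/
def Pref (α : Type*) : Type _ :=
  {r : α → α → Prop //
    (∀ a b, r a b ∨ a = b ∨ r b a) ∧ (∀ a, ¬ r a a) ∧ (∀ a b c, r a b → r b c → r a c)}

/-- Restriction `σ_{−B}` of a preference on `Fin m` to the alternatives outside `B`. -/
def restrictPref {m : ℕ} (B : Finset (Fin m)) (σ : Pref (Fin m)) :
    Pref {x : Fin m // x ∉ B} :=
  ⟨fun a b => σ.1 a.1 b.1, by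
    obtain ⟨h1, h2, h3⟩ := σ.2
    refine ⟨fun a b => ?_, fun a => h2 a.1, fun a b c => h3 a.1 b.1 c.1⟩
    rcases h1 a.1 b.1 with h | h | h
    · exact Or.inl h
    · exact Or.inr (Or.inl (Subtype.ext h))
    · exact Or.inr (Or.inr h)⟩

/-- Extension `π^{+B}` of a preference `π` on `[m] ∖ B` to all of `Fin m`: it agrees
with `π` outside `B`, places every alternative outside `B` before every alternative
in `B`, and orders `B` by the natural order on `Fin m`. -/
def extendPref {m : ℕ} (B : Finset (Fin m)) (π : Pref {x : Fin m // x ∉ B}) :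
    Pref (Fin m) :=
  ⟨fun a b =>
    if ha : a ∈ B then b ∈ B ∧ a < b
    else if hb : b ∈ B then True
    else π.1 ⟨a, ha⟩ ⟨b, hb⟩, by
    obtain ⟨h1, h2, h3⟩ := π.2
    refine ⟨fun a b => ?_, fun a => ?_, fun a b c => ?_⟩
    · by_cases ha : a ∈ B <;> by_cases hb : b ∈ B <;> simp [ha, hb]
      · rcases lt_trichotomy a b with h | h | h
        · exact Or.inl h
        · exact Or.inr (Or.inl h)
        · exact Or.inr (Or.inr h)
      · rcases h1 ⟨a, ha⟩ ⟨b, hb⟩ with h | h | h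
        · exact Or.inl h
        · exact Or.inr (Or.inl (congrArg Subtype.val h))
        · exact Or.inr (Or.inr h)
    · by_cases ha : a ∈ B <;> simp [ha, h2]
    · by_cases ha : a ∈ B <;> by_cases hb : b ∈ B <;> by_cases hc : c ∈ B <;>
        simp [ha, hb, hc]
      · exact fun hab hbc => lt_trans hab hbc
      · exact fun hab hbc => h3 _ _ _ hab hbc⟩

/-- `a` is preferred to `b` by every agent implies `a` is preferred to `b` in the
aggregate ranking. -/
def Unanimous {n : ℕ} {α : Type*} (W : (Fin n → Pref α) → Pref α) : Prop :=
  ∀ (R : Fin n → Pref α) (a b : α), (∀ i, (R i).1 a b) → (W R).1 a b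

/-- Independence of irrelevant alternatives. -/
def IIA {n : ℕ} {α : Type*} (W : (Fin n → Pref α) → Pref α) : Prop :=
  ∀ (R R' : Fin n → Pref α) (a b : α),
    (∀ i, (R i).1 a b ↔ (R' i).1 a b) → ((W R).1 a b ↔ (W R').1 a b)

/-- Some agent's preference is always reproduced verbatim by `W`. -/
def Dictatorial {n : ℕ} {α : Type*} (W : (Fin n → Pref α) → Pref α) : Prop :=
  ∃ i : Fin n, ∀ R : Fin n → Pref α, W R = R i

/-- The social welfare function `W_{−B}` over the alternatives `[m] ∖ B`:
`W_{−B}(R₁,…,Rₙ) = W(R₁^{+B},…,Rₙ^{+B})_{−B}`. -/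
def Wminus {m n : ℕ} (B : Finset (Fin m))
    (W : (Fin n → Pref (Fin m)) → Pref (Fin m))
    (R : Fin n → Pref {x : Fin m // x ∉ B}) : Pref {x : Fin m // x ∉ B} :=
  restrictPref B (W fun i => extendPref B (R i))

/-- The extension `π^{+B}` agrees with `π` on alternatives outside `B`. -/
theorem extendPref_apply_coe {m : ℕ} (B : Finset (Fin m)) (π : Pref {x : Fin m // x ∉ B})
    (a b : {x : Fin m // x ∉ B}) : (extendPref B π).1 a.1 b.1 ↔ π.1 a b := by
  simp [extendPref, a.2, b.2]

theorem stmt14 (m n : ℕ) (hm : 1 ≤ m) (hn : 1 ≤ n)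
    (W : (Fin n → Pref (Fin m)) → Pref (Fin m))
    (hU : Unanimous W) (hIIA : IIA W)
    (B : Finset (Fin m)) (hB : B ≠ Finset.univ) :
    Unanimous (Wminus B W) ∧ IIA (Wminus B W) := by
  refine ⟨fun R a b h => ?_, fun R R' a b h => ?_⟩
  · exact hU _ a.1 b.1 fun i => (extendPref_apply_coe B (R i) a b).2 (h i)
  · exact hIIA _ _ a.1 b.1 fun i =>
      (extendPref_apply_coe B (R i) a b).trans
        ((h i).trans (extendPref_apply_coe B (R' i) a b).symm)
end

section
/- Let m, n ≥ 1 and let W be a social choice function for n agents over the alternatives [m] that is onto and strategyproof. Then for every B ⊊ [m] and every profile R = (R_1,…,R_n) of preferences over [m]∖B, the value W(R_1^{+B},…,R_n^{+B}) does not belong to B. -/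
/-- Strategyproofness: no agent `i` can, by misreporting its preference as `π`,
obtain an outcome it strictly prefers (under its true preference `R i`). -/
def SCFStrategyproof {n : ℕ} {α : Type*} [DecidableEq (Fin n)]
    (W : (Fin n → Pref α) → α) : Prop :=
  ∀ (R : Fin n → Pref α) (i : Fin n) (π : Pref α),
    ¬ (R i).1 (W (Function.update R i π)) (W R)

/-- `a` is the most preferred element of the preference `σ`. -/
def PrefTop {α : Type*} (σ : Pref α) (a : α) : Prop := ∀ b, b ≠ a → σ.1 a b

/-- Some agent's top alternative is always the outcome of `W`. -/
def SCFDictatorial {n : ℕ} {α : Type*} (W : (Fin n → Pref α) → α) : Prop :=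
  ∃ i : Fin n, ∀ R : Fin n → Pref α, PrefTop (R i) (W R)

/-- One step of Maskin monotonicity: the outcome survives a change of a single preference
that keeps below it everything that was below it. -/
theorem SCFStrategyproof.update_eq {n : ℕ} {α : Type*} {W : (Fin n → Pref α) → α}
    (hsp : SCFStrategyproof W) (R : Fin n → Pref α) (i : Fin n) (π : Pref α)
    (h : ∀ c, (R i).1 (W R) c → π.1 (W R) c) :
    W (Function.update R i π) = W R := by
  rcases (R i).2.1 (W (Function.update R i π)) (W R) with h1 | h1 | h1
  · exact absurd h1 (hsp R i π)
  · exact h1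
  · have h2 := hsp (Function.update R i π) i (R i)
    rw [Function.update_idem, Function.update_eq_self, Function.update_self] at h2
    exact absurd (h _ h1) h2

/-- Maskin monotonicity of strategyproof social choice functions. -/
theorem SCFStrategyproof.monotone {n : ℕ} {α : Type*} {W : (Fin n → Pref α) → α}
    (hsp : SCFStrategyproof W) (R R' : Fin n → Pref α)
    (h : ∀ i c, (R i).1 (W R) c → (R' i).1 (W R) c) :
    W R' = W R := by
  suffices hs : ∀ s : Finset (Fin n), W (s.piecewise R' R) = W R by
    simpa using hs Finset.univ
  intro s
  induction s using Finset.induction_on with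
  | empty => simp
  | insert i s hi ih =>
    rw [Finset.piecewise_insert, hsp.update_eq, ih]
    intro c hc
    rw [ih, Finset.piecewise_eq_of_notMem _ _ _ hi] at hc
    rw [ih]
    exact h i c hc

/-- The preference on `α` induced by an injective ranking. -/
def prefOfInjective {α : Type*} (f : α → ℕ) (hf : Function.Injective f) : Pref α :=
  ⟨fun x y => f x < f y, fun x y => (lt_trichotomy (f x) (f y)).imp_right (Or.imp_left (@hf x y)),
    fun x => lt_irrefl (f x), fun _ _ _ => lt_trans⟩

/-- For distinct alternatives `a` and `b`, some preference ranks `a` first and `b` second. -/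
theorem exists_pref_first_second {m : ℕ} {a b : Fin m} (hab : a ≠ b) :
    ∃ σ : Pref (Fin m), PrefTop σ a ∧ ∀ c, c ≠ a → c ≠ b → σ.1 b c := by
  refine ⟨prefOfInjective
    (fun x => if x = a then 0 else if x = b then 1 else (x : ℕ) + 2) ?_, ?_, ?_⟩
  · intro x y hxy
    simp only at hxy
    split_ifs at hxy <;> omega
  · intro c hc
    simp only [prefOfInjective, if_true, if_neg hc]
    split_ifs <;> omega
  · intro c hca hcb
    simp only [prefOfInjective, if_true, if_neg hca, if_neg hcb, if_neg hab.symm]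
    omega

theorem stmt16 (m n : ℕ) (hm : 1 ≤ m) (hn : 1 ≤ n)
    (W : (Fin n → Pref (Fin m)) → Fin m)
    (honto : Function.Surjective W) (hsp : SCFStrategyproof W)
    (B : Finset (Fin m)) (hB : B ⊂ Finset.univ) :
    ∀ R : Fin n → Pref {x : Fin m // x ∉ B},
      W (fun i => extendPref B (R i)) ∉ B := by
  intro R hb
  obtain ⟨a, -, ha⟩ := Finset.exists_of_ssubset hB
  set E : Fin n → Pref (Fin m) := fun i => extendPref B (R i) with hE
  have hab : a ≠ W E := fun h => ha (h ▸ hb)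
  obtain ⟨σ, hσa, hσb⟩ := exists_pref_first_second hab
  obtain ⟨R₀, hR₀⟩ := honto a
  have h₁ : W (fun _ => σ) = W R₀ := by
    refine hsp.monotone R₀ _ fun i c hc => ?_
    rw [hR₀] at hc ⊢
    refine hσa c ?_
    rintro rfl
    exact (R₀ i).2.2.1 _ hc
  have h₂ : W (fun _ => σ) = W E := by
    refine hsp.monotone E _ fun i c hc => hσb c ?_ ?_
    · rintro rfl
      simp only [hE, extendPref] at hc hb
      rw [dif_pos hb] at hc
      exact ha hc.1
    · intro h
      rw [h] at hc
      exact (E i).2.2.1 _ hc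
  exact hab (hR₀.symm.trans (h₁.symm.trans h₂))
end

section
/- Let m, n ≥ 1 and let W be a social choice function for n agents over the alternatives [m] that is onto and strategyproof. Then W is unanimous: for every profile R = (R_1,…,R_n) and every alternative a, if a is the most preferred element of R_i for every agent i, then W(R) = a. -/
/-- Under a strategyproof rule, switching one agent to a preference that ranks the current
outcome first does not change the outcome. -/
theorem SCFStrategyproof.update_eq_of_prefTop {n : ℕ} {α : Type*} {W : (Fin n → Pref α) → α}
    (hsp : SCFStrategyproof W) (R : Fin n → Pref α) (i : Fin n) {σ : Pref α}
    (hσ : PrefTop σ (W R)) : W (Function.update R i σ) = W R := by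
  by_contra hne
  refine hsp (Function.update R i σ) i (R i) ?_
  simpa using hσ _ hne

theorem stmt17 (m n : ℕ) (hm : 1 ≤ m) (hn : 1 ≤ n)
    (W : (Fin n → Pref (Fin m)) → Fin m)
    (honto : Function.Surjective W) (hsp : SCFStrategyproof W) :
    ∀ (R : Fin n → Pref (Fin m)) (a : Fin m), (∀ i, PrefTop (R i) a) → W R = a := by
  intro R a htop
  obtain ⟨R', hR'⟩ := honto a
  have hswitch : ∀ s : Finset (Fin n), W (s.piecewise R R') = a := by
    intro s
    induction s using Finset.induction_on with
    | empty => simpa using hR'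
    | insert j s _ ih =>
      rw [Finset.piecewise_insert,
        hsp.update_eq_of_prefTop (s.piecewise R R') j (by rw [ih]; exact htop j), ih]
  simpa using hswitch Finset.univ
end
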